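/- As l → √3·a from below (within the interval (√2·a, √3·a)), the density satisfies a·P₃(l) = (9/5)·(√3 − l/a)⁵ + O((√3 − l/a)⁶); that is, the function l ↦ a·P₃(l) − (9/5)·(√3 − l/a)⁵ is big-O of (√3 − l/a)⁶ as l tends to √3·a from the left. -/

import Mathlib

open MeasureTheory Real Set Filter Topology Asymptotics

/-- The density of separations on the range `√2·a ≤ l ≤ √3·a`. -/
noncomputable def P₃ (a l : ℝ) : ℝ :=
  l / a ^ 6 *
    (8 * a * (l ^ 2 + a ^ 2) * Real.sqrt (l ^ 2 - 2 * a ^ 2)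
      - (l ^ 2 + a ^ 2) * (l ^ 2 + 5 * a ^ 2)
      + 2 * π * a ^ 2 * (3 * l ^ 2 - 4 * a * l + 3 * a ^ 2)
      + 24 * a ^ 3 * l * Real.arccos (a ^ 2 / (l ^ 2 - a ^ 2))
      - 24 * a ^ 2 * (l ^ 2 + a ^ 2) * Real.arccos (a / Real.sqrt (l ^ 2 - a ^ 2)))


lemma bigO_step (f f' : ℝ → ℝ) (r : ℝ) (n : ℕ) (hf : ∀ᶠ x in 𝓝 r, HasDerivAt f (f' x) x)
    (h0 : f r = 0) (hO : f' =O[𝓝 r] fun x => (x - r) ^ n) :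
    f =O[𝓝 r] fun x => (x - r) ^ (n + 1) := by
  obtain ⟨C, hc, hC⟩ := hO.exists_pos
  replace hC := hC.bound
  obtain ⟨ε, hε, H⟩ := Metric.eventually_nhds_iff_ball.1 (hf.and hC)
  refine IsBigO.of_bound C ?_
  filter_upwards [Metric.ball_mem_nhds r hε] with x hx
  have key := (convex_uIcc r x).norm_image_sub_le_of_norm_hasDerivWithin_le
    (f := f) (f' := f') (C := C * |x - r| ^ n) (x := r) (y := x) ?_ ?_ left_mem_uIcc right_mem_uIcc
  · rw [h0, sub_zero] at key
    simpa [pow_succ, mul_assoc] using key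
  · intro y hy
    have hy' : |y - r| ≤ |x - r| := Set.abs_sub_left_of_mem_uIcc hy
    refine (H y ?_).1.hasDerivWithinAt
    rw [Metric.mem_ball, Real.dist_eq] at *
    linarith
  · intro y hy
    have hy' : |y - r| ≤ |x - r| := Set.abs_sub_left_of_mem_uIcc hy
    have hyb : y ∈ Metric.ball r ε := by
      rw [Metric.mem_ball, Real.dist_eq] at *
      linarith
    have h2 := (H y hyb).2
    rw [norm_pow, Real.norm_eq_abs (y - r)] at h2
    exact h2.trans (by gcongr)

noncomputable def gS (x : ℝ) : ℝ := Real.sqrt (x ^ 2 - 2)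
noncomputable def gA (x : ℝ) : ℝ := Real.arccos (1 / (x ^ 2 - 1))
noncomputable def gB (x : ℝ) : ℝ := Real.arctan (gS x)

lemma gS_sq {x : ℝ} (hx : 2 < x ^ 2) : gS x ^ 2 = x ^ 2 - 2 := Real.sq_sqrt (by linarith)
lemma gS_pos {x : ℝ} (hx : 2 < x ^ 2) : 0 < gS x := Real.sqrt_pos.2 (by linarith)

lemma gS_deriv {x : ℝ} (hx : 2 < x ^ 2) : HasDerivAt gS (x / gS x) x := by
  have h := (((hasDerivAt_id x).pow 2).sub_const 2).sqrt (by simp; linarith)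
  refine h.congr_deriv ?_
  have := gS_pos hx
  simp only [gS] at *
  simp
  field_simp

lemma gB_deriv {x : ℝ} (hx : 2 < x ^ 2) : HasDerivAt gB (x / (gS x * (x ^ 2 - 1))) x := by
  have h := (gS_deriv hx).arctan
  refine h.congr_deriv ?_
  have := gS_pos hx
  have h1 : 0 < x ^ 2 - 1 := by linarith
  rw [gS_sq hx, show 1 + (x ^ 2 - 2) = x ^ 2 - 1 by ring]
  field_simp

lemma gA_deriv {x : ℝ} (h0 : 0 < x) (hx : 2 < x ^ 2) :
    HasDerivAt gA (2 / (gS x * (x ^ 2 - 1))) x := by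
  have h1 : 0 < x ^ 2 - 1 := by linarith
  have hs := gS_pos hx
  have hlt : 1 / (x ^ 2 - 1) < 1 := by rw [div_lt_one h1]; linarith
  have hpos : 0 < 1 / (x ^ 2 - 1) := by positivity
  have hu : HasDerivAt (fun y : ℝ => 1 / (y ^ 2 - 1)) (-(2 * x) / (x ^ 2 - 1) ^ 2) x := by
    have := (((hasDerivAt_id x).pow 2).sub_const 1).inv (by simpa using h1.ne')
    refine (this.congr_deriv (by simp)).congr_of_eventuallyEq (Eventually.of_forall fun y => ?_)
    simp
  have h := (Real.hasDerivAt_arccos (x := 1 / (x ^ 2 - 1)) (by linarith) (by linarith)).comp x hu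
  refine h.congr_deriv ?_
  have hsq : Real.sqrt (1 - (1 / (x ^ 2 - 1)) ^ 2) = x * gS x / (x ^ 2 - 1) := by
    rw [Real.sqrt_eq_iff_mul_self_eq_of_pos (by positivity), ← pow_two, div_pow, mul_pow, gS_sq hx]
    field_simp
    ring
  rw [hsq]
  field_simp

noncomputable def cc : ℝ := 3 * Real.sqrt 3 / 5
noncomputable def gg (x : ℝ) : ℝ := 8 * (x ^ 2 + 1) * gS x - (x ^ 2 + 1) * (x ^ 2 + 5)
  + 2 * π * (3 * x ^ 2 - 4 * x + 3) + 24 * x * gA x - 24 * (x ^ 2 + 1) * gB x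
noncomputable def h0 (x : ℝ) : ℝ := gg x + cc * (x - √3) ^ 5
noncomputable def h1 (x : ℝ) : ℝ := 24 * x * gS x - 4 * x ^ 3 - 12 * x + 2 * π * (6 * x - 4)
  + 24 * gA x - 48 * x * gB x + 5 * cc * (x - √3) ^ 4
noncomputable def h2 (x : ℝ) : ℝ := 48 * gS x - 12 * x ^ 2 - 12 + 12 * π - 48 * gB x
  + 20 * cc * (x - √3) ^ 3
noncomputable def h3 (x : ℝ) : ℝ := -24 * x * (gS x - 1) ^ 2 / (x ^ 2 - 1) + 60 * cc * (x - √3) ^ 2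

lemma pw (x r : ℝ) (n : ℕ) : HasDerivAt (fun y : ℝ => (y - r) ^ (n + 1)) ((n + 1) * (x - r) ^ n) x := by
  exact (((hasDerivAt_id x).sub_const r).pow (n + 1)).congr_deriv (by simp)

lemma h0_deriv {x : ℝ} (p : 0 < x) (hx : 2 < x ^ 2) : HasDerivAt h0 (h1 x) x := by
  have hs := gS_pos hx
  have hq := gS_sq hx
  have hu : 0 < x ^ 2 - 1 := by linarith
  have i := hasDerivAt_id' x
  have q := (i.pow 2)
  have h := (((((((q.add_const 1).const_mul 8).mul (gS_deriv hx)).sub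
    ((q.add_const 1).mul (q.add_const 5))).add
    ((((q.const_mul 3).sub (i.const_mul 4)).add_const 3).const_mul (2 * π))).add
    ((i.const_mul 24).mul (gA_deriv p hx))).sub
    (((q.add_const 1).const_mul 24).mul (gB_deriv hx))).add ((pw x (√3) 4).const_mul cc)
  refine h.congr_deriv ?_
  unfold h1
  have e : x ^ 2 = gS x ^ 2 + 2 := by linarith
  have e1 : gS x ^ 2 + 1 = x ^ 2 - 1 := by linarith
  simp only [Pi.pow_apply, Nat.cast_ofNat]
  field_simp
  grind

lemma h1_deriv {x : ℝ} (p : 0 < x) (hx : 2 < x ^ 2) : HasDerivAt h1 (h2 x) x := by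
  have hs := gS_pos hx
  have hq := gS_sq hx
  have hu : 0 < x ^ 2 - 1 := by linarith
  have i := hasDerivAt_id' x
  have h := ((((((((i.const_mul 24).mul (gS_deriv hx)).sub
    ((i.pow 3).const_mul 4)).sub (i.const_mul 12)).add
    (((i.const_mul 6).sub_const 4).const_mul (2 * π))).add
    ((gA_deriv p hx).const_mul 24)).sub
    ((i.const_mul 48).mul (gB_deriv hx))).add ((pw x (√3) 3).const_mul (5 * cc)))
  refine h.congr_deriv ?_
  unfold h2
  simp only [Pi.pow_apply, Nat.cast_ofNat]
  field_simp
  grind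

lemma h2_deriv {x : ℝ} (hx : 2 < x ^ 2) : HasDerivAt h2 (h3 x) x := by
  have hs := gS_pos hx
  have hq := gS_sq hx
  have hu : 0 < x ^ 2 - 1 := by linarith
  have i := hasDerivAt_id' x
  have h := ((((((((gS_deriv hx).const_mul 48).sub
    ((i.pow 2).const_mul 12)).sub_const 12).add_const (12 * π)).sub
    ((gB_deriv hx).const_mul 48)).add ((pw x (√3) 2).const_mul (20 * cc))))
  refine h.congr_deriv ?_
  unfold h3
  simp only [Nat.cast_ofNat]
  field_simp
  grind

lemma s3 : (√3 : ℝ) ^ 2 = 3 := Real.sq_sqrt (by norm_num)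
lemma gS3 : gS (√3) = 1 := by unfold gS; rw [s3]; norm_num
lemma gB3 : gB (√3) = π / 4 := by unfold gB; rw [gS3, Real.arctan_one]
lemma gA3 : gA (√3) = π / 3 := by
  unfold gA
  rw [s3, show (1 : ℝ) / (3 - 1) = Real.cos (π / 3) by rw [Real.cos_pi_div_three]; norm_num]
  exact Real.arccos_cos (by positivity) (by linarith [Real.pi_pos])

lemma ev : ∀ᶠ x : ℝ in 𝓝 (√3), 0 < x ∧ 2 < x ^ 2 := by
  refine (lt_mem_nhds (by positivity)).and ?_
  have : ContinuousAt (fun x : ℝ => x ^ 2) (√3) := by fun_prop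
  exact this.eventually (lt_mem_nhds (by simp only [s3]; norm_num))

lemma h3_O : h3 =O[𝓝 (√3)] fun x => (x - √3) ^ 3 := by
  let Φ : ℝ → ℝ := fun x => -24 * x * (x + √3) ^ 2 / ((gS x + 1) ^ 2 * (x ^ 2 - 1)) + 60 * cc
  have hd : DifferentiableAt ℝ Φ (√3) := by
    have := (gS_deriv (x := √3) (by rw [s3]; norm_num)).differentiableAt
    refine DifferentiableAt.add_const _ (DifferentiableAt.div (by fun_prop) (by fun_prop) ?_)
    rw [gS3, s3]; norm_num
  have hΦ0 : Φ (√3) = 0 := by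
    simp only [Φ, gS3, s3, cc]
    have := s3
    grind
  have hO := hd.isBigO_sub
  rw [hΦ0] at hO
  have := hO.mul (isBigO_refl (fun x : ℝ => (x - √3) ^ 2) (𝓝 (√3)))
  refine this.congr' ?_ (Eventually.of_forall fun x => by ring)
  filter_upwards [ev] with x hx
  have hs := gS_pos hx.2
  have hq := gS_sq hx.2
  have hu : 0 < x ^ 2 - 1 := by linarith [hx.2]
  have e : gS x - 1 = (x + √3) * (x - √3) / (gS x + 1) := by
    rw [eq_div_iff (by positivity)]
    linear_combination hq + s3
  simp only [h3, Φ, e]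
  field_simp
  ring

lemma h0_O : h0 =O[𝓝 (√3)] fun x => (x - √3) ^ 6 := by
  have a2 := bigO_step h2 h3 (√3) 3 (ev.mono fun x hx => h2_deriv hx.2)
    (by simp only [h2, gS3, gB3, s3]; ring) h3_O
  have a1 := bigO_step h1 h2 (√3) 4 (ev.mono fun x hx => h1_deriv hx.1 hx.2)
    (by simp only [h1, gS3, gB3, gA3]; have := s3; grind) a2
  exact bigO_step h0 h1 (√3) 5 (ev.mono fun x hx => h0_deriv hx.1 hx.2)
    (by simp only [h0, gg, gS3, gB3, gA3, s3]; ring) a1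

lemma P₃_eq (a x : ℝ) (ha : 0 < a) (hx : 2 < x ^ 2) : a * P₃ a (a * x) = x * gg x := by
  have hs := gS_pos hx
  have e1 : Real.sqrt ((a * x) ^ 2 - 2 * a ^ 2) = a * gS x := by
    rw [show (a * x) ^ 2 - 2 * a ^ 2 = a ^ 2 * (x ^ 2 - 2) by ring, Real.sqrt_mul (by positivity),
      Real.sqrt_sq ha.le, gS]
  have e2 : Real.arccos (a ^ 2 / ((a * x) ^ 2 - a ^ 2)) = gA x := by
    rw [gA, show (a * x) ^ 2 - a ^ 2 = a ^ 2 * (x ^ 2 - 1) by ring]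
    congr 1
    field_simp
  have e3 : Real.arccos (a / Real.sqrt ((a * x) ^ 2 - a ^ 2)) = gB x := by
    rw [gB, Real.arctan_eq_arccos hs.le, gS_sq hx, show 1 + (x ^ 2 - 2) = x ^ 2 - 1 by ring,
      show (a * x) ^ 2 - a ^ 2 = a ^ 2 * (x ^ 2 - 1) by ring, Real.sqrt_mul (by positivity),
      Real.sqrt_sq ha.le]
    congr 1
    field_simp
  rw [P₃, e1, e2, e3, gg]
  field_simp

theorem density_asymptotics_near_diagonal (a : ℝ) (ha : 0 < a) :
    (fun l => a * P₃ a l - 9 / 5 * (Real.sqrt 3 - l / a) ^ 5) =O[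
        𝓝[Set.Ioo (Real.sqrt 2 * a) (Real.sqrt 3 * a)] (Real.sqrt 3 * a)]
      (fun l => (Real.sqrt 3 - l / a) ^ 6) := by
  have ht : Tendsto (fun l : ℝ => l / a) (𝓝 (√3 * a)) (𝓝 (√3)) := by
    have : ContinuousAt (fun l : ℝ => l / a) (√3 * a) := by fun_prop
    have h := this.tendsto
    simpa [ha.ne'] using h
  have hid : (fun x : ℝ => x) =O[𝓝 (√3)] fun _ => (1 : ℝ) :=
    (continuousAt_id (x := √3)).isBigO_one ℝ
  have m := (hid.mul h0_O).sub ((isBigO_refl (fun x : ℝ => 1 * (x - √3) ^ 6) (𝓝 (√3))).const_mul_left cc)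
  refine ((m.comp_tendsto ht).mono nhdsWithin_le_nhds).congr' ?_
    (Eventually.of_forall fun l => by simp only [Function.comp]; ring)
  filter_upwards [nhdsWithin_le_nhds (ht.eventually ev)] with l hl
  have := P₃_eq a (l / a) ha hl.2
  rw [mul_div_cancel₀ l ha.ne'] at this
  rw [this]
  simp only [Function.comp, h0, cc]
  have := s3
  generalize l / a = x at *
  linear_combination (3 / 5 * (x - √3) ^ 5) * s3
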